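/- For all v, w ∈ S_n, the following identity holds in the polynomial ring ℤ[t_1,…,t_n]: Σ_{P ∈ RedFKPipes(w_0 w)} ∏_{(i,j)∈P} (t_{v(j)} − t_{n−i+1}) = Σ_{P ∈ RedPipes(v, w_0 w)} ∏_{(i,j)∈P} (t_{v(j)} − t_{n−i+1}). (The left-hand side is the double Schubert polynomial 𝔖_{w_0 w}(x;y), given by the Fomin–Kirillov pipe dream formula, evaluated at x_j = t_{v(j)} and y_i = t_{n−i+1}.) -/

import Mathlib

/-!
Both sums are matrix coefficients in the nilCoxeter algebra, after Fomin and Kirillov. With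
generators `u_l` and `h_l(a) = 1 + a u_l`, expanding the product of
`h_{label}(t_{v(j)} - t_{n-i+1})` over the boxes of a diagram in reading order gives the
generating function of its reduced pipe dreams (`sum_diagram_eq`); the algebra is realized by
operators on functions on `S_n`. It then suffices to prove that the product over the staircase
equals the product over `D(v)`, and this uses only that the `h_l(a)` are additive in `a`, commute
at distant labels and satisfy the Yang–Baxter equation (`IsYangBaxter`).

Write `x_j = t_{v(j)}` for the column parameters. By the Yang–Baxter equation, multiplying the
staircase product on the right by `h_k(x_{k+1} - x_k)` interchanges `x_k` and `x_{k+1}`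
(`stairProd_swap`, the divided difference recursion). Consider the bottom row of the staircase,
whose parameter `y` equals `x_k` for `k = v⁻¹(n)`. The factor in column `k` is `h_k(0) = 1`, which
splits the row into commuting left and right parts. The right part,
`h_{k+1}(x_{k+1} - x_k) ⋯ h_{n-1}(x_{n-1} - x_k)`, is exactly the product that moves column `k` of
the smaller staircase formed by the upper rows (its labels are shifted by one) to the last
position, where it carries no box. What remains is the staircase on the columns other than `k`,
times the left part (`stairProd_specialize`). The left part is the bottom row of `D(v)`, whose
upper rows form the Rothe diagram of `v` with the value `n` removed, so induction on the number
of rows finishes the proof (`rothe_topRows`).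
-/


open Equiv MvPolynomial

noncomputable section
open scoped Classical

variable {n : ℕ}

/-- The 0-based value of a permutation of `Fin n` on a natural number,
extended by the identity outside `{0, …, n-1}`. -/
def permVal (v : Equiv.Perm (Fin n)) (j : ℕ) : ℕ :=
  if h : j < n then (v ⟨j, h⟩ : ℕ) else j

/-- The longest element `w₀` of the symmetric group, `w₀(i) = n + 1 - i` (1-based). -/
def longest : Equiv.Perm (Fin n) :=
  ⟨Fin.rev, Fin.rev, Fin.rev_rev, Fin.rev_rev⟩

/-- The Rothe diagram of `v`, as a set of 0-based boxes `(i, j)` where `i` counts rows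
from the bottom and `j` columns from the left.  In 1-based terms this is
`{(i,j) : i < n - v(j) + 1 and j < v⁻¹(n - i + 1)}`. -/
def Rothe (v : Equiv.Perm (Fin n)) : Finset (ℕ × ℕ) :=
  (Finset.range n ×ˢ Finset.range n).filter
    (fun p => p.1 + permVal v p.2 + 1 < n ∧ p.2 < permVal v.symm (n - 1 - p.1))

/-- The rank matrix `r^w_{ij} = #{k ≤ j : w(k) ≥ n - i + 1}` (translated to 0-based `i`, `j`). -/
def rankMat (w : Equiv.Perm (Fin n)) (i j : ℕ) : ℕ :=
  ((Finset.range n).filter (fun t => t ≤ j ∧ n ≤ permVal w t + i + 1)).card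

/-- Bruhat order via rank matrices. -/
def bruhatLE (u w : Equiv.Perm (Fin n)) : Prop :=
  ∀ i j : ℕ, rankMat u i j ≤ rankMat w i j

/-- The essential set of `w`. -/
def essentialSet (w : Equiv.Perm (Fin n)) : Finset (ℕ × ℕ) :=
  (Rothe w).filter (fun p => (p.1 + 1, p.2) ∉ Rothe w ∧ (p.1, p.2 + 1) ∉ Rothe w)

/-- The number of inversions (Coxeter length) of a permutation. -/
def invCount (u : Equiv.Perm (Fin n)) : ℕ :=
  ((Finset.univ : Finset (Fin n × Fin n)).filter
    (fun p => p.1 < p.2 ∧ u p.2 < u p.1)).card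

/-- The adjacent transposition `s_l` (`l` 1-based) swapping `l` and `l+1`;
the identity if `l` is out of range. -/
def adjSwap {n : ℕ} (l : ℕ) : Equiv.Perm (Fin n) :=
  if h : 1 ≤ l ∧ l < n then Equiv.swap ⟨l - 1, by omega⟩ ⟨l, h.2⟩ else 1

/-- The canonical (1-based) label of a box of `D(v)`: the `t`-th box from the left in
(1-based) row `i` gets label `i + t - 1`. -/
def canonLabel (v : Equiv.Perm (Fin n)) (b : ℕ × ℕ) : ℕ :=
  b.1 + ((Rothe v).filter (fun b' => b'.1 = b.1 ∧ b'.2 ≤ b.2)).card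

/-- The boxes of `P` listed in reading order: rows from top (largest row index) to bottom,
left to right within each row. -/
def readingList (n : ℕ) (P : Finset (ℕ × ℕ)) : List (ℕ × ℕ) :=
  ((List.range n).reverse).flatMap
    (fun i => ((List.range n).filter (fun j => decide ((i, j) ∈ P))).map (fun j => (i, j)))

/-- One step of the Demazure product: multiply by `s_ℓ` if that increases length. -/
def demStep (v : Equiv.Perm (Fin n)) (u : Equiv.Perm (Fin n)) (b : ℕ × ℕ) :
    Equiv.Perm (Fin n) :=
  if invCount u < invCount (u * adjSwap (canonLabel v b)) then u * adjSwap (canonLabel v b)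
  else u

/-- The Demazure product of a pipe dream `P ⊆ D(v)`, scanning boxes in reading order. -/
def demazure (v : Equiv.Perm (Fin n)) (P : Finset (ℕ × ℕ)) : Equiv.Perm (Fin n) :=
  (readingList n P).foldl (demStep v) 1

/-- Pipe dreams on `D(v)` whose Demazure product is `x`. -/
def Pipes (v x : Equiv.Perm (Fin n)) : Finset (Finset (ℕ × ℕ)) :=
  (Rothe v).powerset.filter (fun P => demazure v P = x)

/-- Reduced pipe dreams on `D(v)` for `x`. -/
def RedPipes (v x : Equiv.Perm (Fin n)) : Finset (Finset (ℕ × ℕ)) :=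
  (Pipes v x).filter (fun P => P.card = invCount x)

/-- Faces of the pipe complex `Δ_{v,w}`: subsets `F ⊆ D(v)` such that `D(v) \ F`
contains a reduced pipe dream for `w₀ w`. -/
def IsFace (v w : Equiv.Perm (Fin n)) (F : Finset (ℕ × ℕ)) : Prop :=
  F ⊆ Rothe v ∧ ∃ P ∈ RedPipes v (longest * w), P ⊆ Rothe v \ F

/-- The staircase `{(i,j) : i + j ≤ n}` (1-based), translated to 0-based boxes. -/
def staircase (n : ℕ) : Finset (ℕ × ℕ) :=
  (Finset.range n ×ˢ Finset.range n).filter (fun p => p.1 + p.2 + 2 ≤ n)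

/-- The label `i + j - 1` (1-based) of a staircase box, in 0-based coordinates. -/
def fkLabel (b : ℕ × ℕ) : ℕ := b.1 + b.2 + 1

/-- One step of the Demazure product for Fomin–Kirillov pipe dreams. -/
def fkStep (u : Equiv.Perm (Fin n)) (b : ℕ × ℕ) : Equiv.Perm (Fin n) :=
  if invCount u < invCount (u * adjSwap (fkLabel b)) then u * adjSwap (fkLabel b) else u

/-- The Demazure product of an FK pipe dream on the staircase. -/
def fkDemazure (n : ℕ) (P : Finset (ℕ × ℕ)) : Equiv.Perm (Fin n) :=
  (readingList n P).foldl fkStep 1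

/-- FK pipe dreams on the staircase with Demazure product `x`. -/
def FKPipes (x : Equiv.Perm (Fin n)) : Finset (Finset (ℕ × ℕ)) :=
  (staircase n).powerset.filter (fun P => fkDemazure n P = x)

/-- Reduced FK pipe dreams for `x`. -/
def RedFKPipes (x : Equiv.Perm (Fin n)) : Finset (Finset (ℕ × ℕ)) :=
  (FKPipes x).filter (fun P => P.card = invCount x)

/-- The coordinate ring `R_v = k[z_{ij} : (i,j) ∈ D(v)]`. -/
abbrev KLRing (k : Type) [Field k] (v : Equiv.Perm (Fin n)) : Type :=
  MvPolynomial {b : ℕ × ℕ // b ∈ Rothe v} k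

/-- The specialized generic matrix `Z^{(v)}`: variables on `D(v)`, `1` in positions
`(n - v(j) + 1, j)` (1-based) and `0` elsewhere. -/
def klMatrix (k : Type) [Field k] (v : Equiv.Perm (Fin n)) :
    Matrix (Fin n) (Fin n) (KLRing k v) := fun i j =>
  if h : ((i : ℕ), (j : ℕ)) ∈ Rothe v then X ⟨((i : ℕ), (j : ℕ)), h⟩
  else if (i : ℕ) + permVal v j + 1 = n then 1 else 0

/-- The minors of size `1 + r^w_{ij}` of the southwest submatrix `Z^{(v)}_{ij}`
(`(i,j)` a 0-based box, so rows `0..i` and columns `0..j`). -/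
def minorsAt (k : Type) [Field k] (v w : Equiv.Perm (Fin n)) (i j : ℕ) :
    Set (KLRing k v) :=
  { d | ∃ ri ci : Fin (rankMat w i j + 1) → Fin n,
      StrictMono ri ∧ StrictMono ci ∧ (∀ a, (ri a : ℕ) ≤ i) ∧ (∀ a, (ci a : ℕ) ≤ j) ∧
      d = ((klMatrix k v).submatrix ri ci).det }

/-- The Kazhdan–Lusztig ideal `I_{v,w}`. -/
def KLIdeal (k : Type) [Field k] (v w : Equiv.Perm (Fin n)) : Ideal (KLRing k v) :=
  Ideal.span { d | ∃ i j : ℕ, i < n ∧ j < n ∧ d ∈ minorsAt k v w i j }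

/-- The essential minors of `I_{v,w}`: those at boxes of the essential set of `w`. -/
def essentialMinors (k : Type) [Field k] (v w : Equiv.Perm (Fin n)) : Set (KLRing k v) :=
  { d | ∃ b ∈ essentialSet w, d ∈ minorsAt k v w b.1 b.2 }

/-- Significance of a variable: `z_{ij} ≻ z_{kl}` iff `j > l` or (`j = l` and `i < k`),
encoded so that larger significance means ≺-larger variable. -/
def sigIdx (n : ℕ) (b : ℕ × ℕ) : ℕ := b.2 * n + (n - 1 - b.1)

/-- The exponent in a monomial of the variable of significance `s`. -/
def expAt {v : Equiv.Perm (Fin n)} (m : {b : ℕ × ℕ // b ∈ Rothe v} →₀ ℕ) (s : ℕ) : ℕ :=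
  ∑ b ∈ m.support, if sigIdx n (b : ℕ × ℕ) = s then m b else 0

/-- The lexicographic comparison of monomials: `m ≻ m'`. -/
def monGT {v : Equiv.Perm (Fin n)} (m m' : {b : ℕ × ℕ // b ∈ Rothe v} →₀ ℕ) : Prop :=
  ∃ s : ℕ, expAt m' s < expAt m s ∧ ∀ t : ℕ, s < t → expAt m t = expAt m' t

/-- `L` is the ≺-leading term of `f`. -/
def IsLeadTerm (k : Type) [Field k] {v : Equiv.Perm (Fin n)} (f L : KLRing k v) : Prop :=
  ∃ m ∈ f.support, (∀ m' ∈ f.support, m' ≠ m → monGT m m') ∧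
    L = MvPolynomial.monomial m (f.coeff m)

/-- The initial ideal of `I` with respect to `≺`: the ideal generated by the leading
terms of all nonzero elements of `I`. -/
def initialIdeal (k : Type) [Field k] {v : Equiv.Perm (Fin n)} (I : Ideal (KLRing k v)) :
    Ideal (KLRing k v) :=
  Ideal.span { L | ∃ f ∈ I, f ≠ 0 ∧ IsLeadTerm k f L }


/-- `i` (1-based) is the last ascent of `v`: `v(i) < v(i+1)` and no ascent occurs later. -/
def IsLastAscent (v : Equiv.Perm (Fin n)) (i : ℕ) : Prop :=
  1 ≤ i ∧ i < n ∧ permVal v (i - 1) < permVal v i ∧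
    ∀ i' : ℕ, i < i' → i' < n → ¬ permVal v (i' - 1) < permVal v i'

/-- The box `z_last = (n - v(i+1) + 1, i)` (1-based), in 0-based coordinates,
where `i` is the last ascent of `v`. -/
def zlastBox (v : Equiv.Perm (Fin n)) (i : ℕ) : ℕ × ℕ :=
  (n - permVal v i - 1, i - 1)

/-- The relabeling map `φ`: delete the box `z_last` and move every other box of
column `i` (1-based) one step to the right. -/
def phiMap (v : Equiv.Perm (Fin n)) (i : ℕ) (P : Finset (ℕ × ℕ)) : Finset (ℕ × ℕ) :=
  P.filter (fun b => b.2 ≠ i - 1) ∪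
    ((P.filter (fun b => b.2 = i - 1 ∧ b.1 ≠ n - permVal v i - 1)).image
      (fun b => (b.1, b.2 + 1)))

/-! ### Yang–Baxter families and staircase products -/

/-- A family `h i a` (`i` a label, `a` a spectral parameter) that is additive in `a`, commutes at
distant labels and satisfies the additive Yang–Baxter equation at adjacent ones. -/
structure IsYangBaxter {R M : Type*} [CommRing R] [Monoid M] (h : ℕ → R → M) : Prop where
  zero : ∀ i, h i 0 = 1
  add : ∀ i a b, h i a * h i b = h i (a + b)
  comm : ∀ i j a b, i + 2 ≤ j → h i a * h j b = h j b * h i a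
  braid : ∀ i a b, h i a * h (i + 1) (a + b) * h i b = h (i + 1) b * h i (a + b) * h (i + 1) a

section Abstract

variable {R M : Type*} [CommRing R] [Monoid M] {h : ℕ → R → M}

/-- One row of a pipe diagram: the product of `h (l + t) (x_t - y)` over the entries `x_t`
of a list, from left to right. -/
def rowProd (h : ℕ → R → M) : ℕ → R → List R → M
  | _, _, [] => 1
  | l, y, x :: xs => h l (x - y) * rowProd h (l + 1) y xs

/-- The staircase product: rows indexed by `ys` (bottom row first), columns by `xs`, each row one
box shorter than the one below it.  The bottom row, whose labels start at `l`, omits the last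
column and is the rightmost factor. -/
def stairProd (h : ℕ → R → M) : ℕ → List R → List R → M
  | _, [], _ => 1
  | l, y :: ys, xs => stairProd h (l + 1) ys xs.dropLast * rowProd h l y xs.dropLast

lemma rowProd_append (l : ℕ) (y : R) (A B : List R) :
    rowProd h l y (A ++ B) = rowProd h l y A * rowProd h (l + A.length) y B := by
  induction A generalizing l with
  | nil => simp [rowProd]
  | cons a A ih =>
    simp only [List.cons_append, rowProd, ih, List.length_cons, mul_assoc]
    rw [show l + 1 + A.length = l + (A.length + 1) by ring]

lemma rowProd_comm_left (H : IsYangBaxter h) (l : ℕ) (y a : R) (A : List R) (k : ℕ)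
    (hk : l + A.length + 1 ≤ k) : rowProd h l y A * h k a = h k a * rowProd h l y A := by
  induction A generalizing l with
  | nil => simp [rowProd]
  | cons b A ih =>
    simp only [List.length_cons] at hk
    simp only [rowProd]
    rw [mul_assoc, ih _ (by omega), ← mul_assoc, H.comm l k _ _ (by omega), mul_assoc]

lemma rowProd_comm_right (H : IsYangBaxter h) (l : ℕ) (y a : R) (A : List R) (k : ℕ)
    (hk : k + 2 ≤ l) : rowProd h l y A * h k a = h k a * rowProd h l y A := by
  induction A generalizing l with
  | nil => simp [rowProd]
  | cons b A ih =>
    simp only [rowProd]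
    rw [mul_assoc, ih _ (by omega), ← mul_assoc, ← H.comm k l _ _ (by omega), mul_assoc]

lemma rowProd_comm_rowProd (H : IsYangBaxter h) (l k : ℕ) (y z : R) (A B : List R)
    (hk : l + A.length + 1 ≤ k) :
    rowProd h l y A * rowProd h k z B = rowProd h k z B * rowProd h l y A := by
  induction B generalizing k with
  | nil => simp [rowProd]
  | cons b B ih =>
    simp only [rowProd]
    rw [← mul_assoc, rowProd_comm_left H _ _ _ _ _ hk, mul_assoc, ih _ (by omega), mul_assoc]

lemma stairProd_last (l : ℕ) (ys A : List R) (x z : R) :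
    stairProd h l ys (A ++ [x]) = stairProd h l ys (A ++ [z]) := by
  cases ys with
  | nil => rfl
  | cons y ys => simp [stairProd]

/-- Interchanging two adjacent columns of a row lets a factor pass through it, raising its label
by one: this is the Yang–Baxter equation. -/
lemma rowProd_swap (H : IsYangBaxter h) (l : ℕ) (y x z : R) (A C : List R) :
    rowProd h l y (A ++ x :: z :: C) * h (l + A.length) (z - x)
      = h (l + 1 + A.length) (z - x) * rowProd h l y (A ++ z :: x :: C) := by
  have hb := H.braid (l + A.length) (x - y) (z - x)
  rw [show x - y + (z - x) = z - y by ring] at hb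
  simp only [rowProd_append, rowProd]
  rw [show l + 1 + A.length = l + A.length + 1 by ring]
  simp only [mul_assoc] at hb ⊢
  rw [rowProd_comm_right H (l + A.length + 1 + 1) y _ C (l + A.length) (by omega)]
  rw [← mul_assoc (h _ (z - x)) (rowProd h l y A),
    ← rowProd_comm_left H l y (z - x) A (l + A.length + 1) (by omega)]
  simp only [mul_assoc]
  congr 1
  simp only [← mul_assoc] at hb ⊢
  rw [hb]

/-- The generating-function form of the divided difference recursion for double Schubert
polynomials. -/
lemma stairProd_swap (H : IsYangBaxter h) (l : ℕ) (ys A C : List R) (x z : R)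
    (hl : ys.length = (A ++ x :: z :: C).length) :
    stairProd h l ys (A ++ x :: z :: C) * h (l + A.length) (z - x)
      = stairProd h l ys (A ++ z :: x :: C) := by
  induction ys generalizing l C with
  | nil => simp at hl
  | cons y ys ih =>
    rcases List.eq_nil_or_concat C with rfl | ⟨C, w, rfl⟩
    · have e1 : (A ++ [x, z]).dropLast = A ++ [x] := by
        rw [show A ++ [x, z] = (A ++ [x]) ++ [z] by simp, List.dropLast_concat]
      have e2 : (A ++ [z, x]).dropLast = A ++ [z] := by
        rw [show A ++ [z, x] = (A ++ [z]) ++ [x] by simp, List.dropLast_concat]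
      simp only [stairProd, e1, e2, rowProd_append, rowProd, mul_one, mul_assoc, H.add]
      rw [show x - y + (z - x) = z - y by ring, stairProd_last _ ys A x z]
    · have e1 : (A ++ x :: z :: (C.concat w)).dropLast = A ++ x :: z :: C := by
        rw [show A ++ x :: z :: (C.concat w) = (A ++ x :: z :: C) ++ [w] by simp,
          List.dropLast_concat]
      have e2 : (A ++ z :: x :: (C.concat w)).dropLast = A ++ z :: x :: C := by
        rw [show A ++ z :: x :: (C.concat w) = (A ++ z :: x :: C) ++ [w] by simp,
          List.dropLast_concat]
      simp only [stairProd, e1, e2]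
      rw [mul_assoc, rowProd_swap H, ← mul_assoc, ih]
      simp at hl ⊢
      omega

/-- Iterated swaps carry a column `y` to the last position, where it no longer matters. -/
lemma stairProd_move (H : IsYangBaxter h) (l : ℕ) (ys A C : List R) (y z : R)
    (hl : ys.length = (A ++ y :: C).length) :
    stairProd h l ys (A ++ y :: C) * rowProd h (l + A.length) y C
      = stairProd h l ys (A ++ (C ++ [z])) := by
  induction C generalizing A with
  | nil => simpa [rowProd] using stairProd_last l ys A y z
  | cons c C ih =>
    simp only [rowProd]
    rw [← mul_assoc, stairProd_swap H l ys A C y c hl]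
    have := ih (A ++ [c]) (by simp at hl ⊢; omega)
    simpa [add_assoc] using this

/-- If the row parameter `y` occurs among the column parameters, its column can be removed from
the staircase, at the cost of shortening the bottom row to the columns on its left. -/
lemma stairProd_specialize (H : IsYangBaxter h) (l : ℕ) (ys A B : List R) (y : R)
    (hl : ys.length = (A ++ B).length) :
    stairProd h l (y :: ys) (A ++ y :: B) = stairProd h (l + 1) ys (A ++ B) * rowProd h l y A := by
  rcases List.eq_nil_or_concat B with rfl | ⟨C, z, rfl⟩
  · simp [stairProd]
  · have e : (A ++ y :: (C.concat z)).dropLast = A ++ y :: C := by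
      rw [show A ++ y :: (C.concat z) = (A ++ y :: C) ++ [z] by simp, List.dropLast_concat]
    simp only [stairProd, e, rowProd_append, rowProd, sub_self, H.zero, one_mul]
    rw [rowProd_comm_rowProd H _ _ _ _ _ _ (by omega), ← mul_assoc,
      show l + A.length + 1 = l + 1 + A.length by ring,
      stairProd_move H (l + 1) ys A C y z (by simp at hl ⊢; omega)]
    simp

end Abstract

/-! ### Inversions and adjacent transpositions -/

lemma adjSwap_mul_self (l : ℕ) : (adjSwap l : Equiv.Perm (Fin n)) * adjSwap l = 1 := by
  unfold adjSwap
  split_ifs <;> simp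

lemma invCount_mul_swap (u : Equiv.Perm (Fin n)) (i j : Fin n) (hij : (j : ℕ) = i + 1)
    (hu : u i < u j) : invCount (u * Equiv.swap i j) = invCount u + 1 := by
  unfold invCount
  set s := Equiv.swap i j with hs
  have hinj : Function.Injective (Prod.map s s) := s.injective.prodMap s.injective
  rw [← Finset.card_image_of_injective
    (Finset.univ.filter fun p : Fin n × Fin n => p.1 < p.2 ∧ u p.2 < u p.1) hinj]
  rw [← Finset.card_insert_of_notMem (a := (i, j))]
  · refine congrArg Finset.card ?_
    -- Off the pair `{i, j}` the swap of adjacent positions preserves the order of positions.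
    have key : ∀ a b : Fin n, a < b → (a, b) ≠ (i, j) → s a < s b := by
      intro a b hab hne
      simp only [hs, Equiv.swap_apply_def]
      simp only [ne_eq, Prod.mk.injEq, not_and] at hne
      simp only [Fin.lt_def, Fin.ext_iff] at *
      split_ifs <;> omega
    have hss : ∀ a, s (s a) = a := fun a => by simp [hs]
    ext ⟨a, b⟩
    rw [Finset.mem_filter, Finset.mem_insert, Finset.mem_image]
    simp only [Finset.mem_filter, Finset.mem_univ, true_and, Prod.exists, Prod.map_apply,
      Prod.mk.injEq, Equiv.Perm.coe_mul, Function.comp_apply]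
    constructor
    · rintro ⟨hab, h⟩
      by_cases hne : (a, b) = (i, j)
      · left; simpa using hne
      · right
        exact ⟨s a, s b, ⟨key a b hab hne, h⟩, hss a, hss b⟩
    · rintro (⟨rfl, rfl⟩ | ⟨c, d, ⟨hcd, h⟩, rfl, rfl⟩)
      · refine ⟨by rw [Fin.lt_def]; omega, ?_⟩
        simpa [hs] using hu
      · refine ⟨key c d hcd ?_, by simpa [hss] using h⟩
        intro he
        simp only [Prod.mk.injEq] at he
        rw [he.1, he.2] at h
        exact absurd h (not_lt.mpr hu.le)
  · simp only [Finset.mem_image, Finset.mem_filter, Finset.mem_univ, true_and, Prod.exists,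
      Prod.map_apply, Prod.mk.injEq, not_exists, not_and]
    rintro a b ⟨hab, -⟩ ha hb
    have ha' : a = j := s.injective (by rw [ha, hs, Equiv.swap_apply_right])
    have hb' : b = i := s.injective (by rw [hb, hs, Equiv.swap_apply_left])
    subst ha' hb'
    rw [Fin.lt_def] at hab
    omega

/-- `l` (1-based) is an ascent of `u`; labels out of range are not ascents. -/
def IsAsc (u : Equiv.Perm (Fin n)) (l : ℕ) : Prop :=
  ∃ h : 1 ≤ l ∧ l < n, u ⟨l - 1, by omega⟩ < u ⟨l, h.2⟩

lemma invCount_of_isAsc {u : Equiv.Perm (Fin n)} {l : ℕ} (h : IsAsc u l) :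
    invCount (u * adjSwap l) = invCount u + 1 := by
  obtain ⟨h, hu⟩ := h
  rw [adjSwap, dif_pos h]
  exact invCount_mul_swap u _ _ (by simp; omega) hu

lemma isAsc_iff (u : Equiv.Perm (Fin n)) (l : ℕ) :
    invCount u < invCount (u * adjSwap l) ↔ IsAsc u l := by
  constructor
  · intro h
    by_cases hl : 1 ≤ l ∧ l < n
    · refine ⟨hl, ?_⟩
      by_contra hc
      have hne : u ⟨l - 1, by omega⟩ ≠ u ⟨l, hl.2⟩ := by
        rw [u.injective.ne_iff, ne_eq, Fin.mk.injEq]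
        omega
      -- A descent of `u` is an ascent of `u * s_l`, so passing to `u * s_l` lowers the length.
      have : IsAsc (u * adjSwap l) l := by
        refine ⟨hl, ?_⟩
        rw [adjSwap, dif_pos hl]
        simpa using lt_of_le_of_ne (not_lt.mp hc) hne.symm
      have := invCount_of_isAsc this
      rw [mul_assoc, adjSwap_mul_self, mul_one] at this
      omega
    · rw [adjSwap, dif_neg hl] at h
      simp at h
  · intro h
    rw [invCount_of_isAsc h]
    omega

/-! ### The nilCoxeter operators -/

section Operators

variable {R : Type*} [CommRing R]

/-- The nilCoxeter generator `u_l`, acting on functions of a permutation: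
`(u_l g)(u) = g(u s_l)` if `l` is an ascent of `u`, and `0` otherwise. -/
def nilOp (R : Type*) [CommRing R] (n l : ℕ) : Module.End R (Equiv.Perm (Fin n) → R) where
  toFun g u := if IsAsc u l then g (u * adjSwap l) else 0
  map_add' f g := by
    funext u
    simp only [Pi.add_apply]
    split_ifs <;> simp
  map_smul' c g := by
    funext u
    simp

lemma nilOp_apply (l : ℕ) (g : Equiv.Perm (Fin n) → R) (u : Equiv.Perm (Fin n)) :
    nilOp R n l g u = if IsAsc u l then g (u * adjSwap l) else 0 := rfl

lemma nilOp_sq (l : ℕ) : nilOp R n l * nilOp R n l = 0 := by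
  refine LinearMap.ext fun g => funext fun u => ?_
  simp only [Module.End.mul_apply, nilOp_apply, LinearMap.zero_apply, Pi.zero_apply]
  split_ifs with h1 h2
  · have e1 := invCount_of_isAsc h1
    have e2 := invCount_of_isAsc h2
    rw [mul_assoc, adjSwap_mul_self, mul_one] at e2
    omega
  all_goals rfl

lemma nilOp_comm (i j : ℕ) (hij : i + 2 ≤ j) :
    nilOp R n i * nilOp R n j = nilOp R n j * nilOp R n i := by
  refine LinearMap.ext fun g => funext fun u => ?_
  simp only [Module.End.mul_apply, nilOp_apply]
  by_cases hi : 1 ≤ i ∧ i < n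
  · by_cases hj : 1 ≤ j ∧ j < n
    · have hs : (adjSwap i : Equiv.Perm (Fin n)) * adjSwap j = adjSwap j * adjSwap i := by
        rw [adjSwap, adjSwap, dif_pos hi, dif_pos hj]
        refine Equiv.Perm.Disjoint.commute ?_
        intro x
        simp only [Equiv.swap_apply_def, Fin.ext_iff]
        split_ifs <;> simp <;> omega
      have h1 : IsAsc (u * adjSwap i) j ↔ IsAsc u j := by
        unfold IsAsc
        refine exists_congr fun _ => ?_
        rw [adjSwap, dif_pos hi, Equiv.Perm.mul_apply, Equiv.Perm.mul_apply,
          Equiv.swap_apply_of_ne_of_ne, Equiv.swap_apply_of_ne_of_ne] <;>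
        simp only [ne_eq, Fin.mk.injEq] <;> omega
      have h2 : IsAsc (u * adjSwap j) i ↔ IsAsc u i := by
        unfold IsAsc
        refine exists_congr fun _ => ?_
        rw [adjSwap, dif_pos hj, Equiv.Perm.mul_apply, Equiv.Perm.mul_apply,
          Equiv.swap_apply_of_ne_of_ne, Equiv.swap_apply_of_ne_of_ne] <;>
        simp only [ne_eq, Fin.mk.injEq] <;> omega
      simp only [h1, h2, mul_assoc, hs]
      split_ifs <;> rfl
    · have : ∀ w : Equiv.Perm (Fin n), ¬ IsAsc w j := fun w h => hj h.1
      simp [this]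
  · have : ∀ w : Equiv.Perm (Fin n), ¬ IsAsc w i := fun w h => hi h.1
    simp [this]

lemma nilOp_braid (i : ℕ) : nilOp R n i * nilOp R n (i + 1) * nilOp R n i
    = nilOp R n (i + 1) * nilOp R n i * nilOp R n (i + 1) := by
  refine LinearMap.ext fun g => funext fun u => ?_
  simp only [Module.End.mul_apply, nilOp_apply]
  by_cases hi : 1 ≤ i ∧ i + 1 < n
  · obtain ⟨i, rfl⟩ : ∃ k, i = k + 1 := ⟨i - 1, by omega⟩
    -- Both sides vanish unless `u` increases along the three positions `a < b < c`.
    set a : Fin n := ⟨i, by omega⟩ with ha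
    set b : Fin n := ⟨i + 1, by omega⟩ with hb
    set c : Fin n := ⟨i + 1 + 1, by omega⟩ with hc
    have hab : a ≠ b := by simp [ha, hb]
    have hbc : b ≠ c := by simp [hb, hc]
    have hac : a ≠ c := by simp [ha, hc]; omega
    have s1 : (adjSwap (i + 1) : Equiv.Perm (Fin n)) = Equiv.swap a b := by
      rw [adjSwap, dif_pos (by omega)]; rfl
    have s2 : (adjSwap (i + 1 + 1) : Equiv.Perm (Fin n)) = Equiv.swap b c := by
      rw [adjSwap, dif_pos (by omega)]; rfl
    have a1 : ∀ w : Equiv.Perm (Fin n), IsAsc w (i + 1) ↔ w a < w b := fun w =>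
      ⟨fun h => h.2, fun h => ⟨by omega, h⟩⟩
    have a2 : ∀ w : Equiv.Perm (Fin n), IsAsc w (i + 1 + 1) ↔ w b < w c := fun w =>
      ⟨fun h => h.2, fun h => ⟨by omega, h⟩⟩
    have hbr : Equiv.swap a b * (Equiv.swap b c * Equiv.swap a b)
        = Equiv.swap b c * (Equiv.swap a b * Equiv.swap b c) := by
      ext x
      simp only [Equiv.Perm.mul_apply, Equiv.swap_apply_def]
      split_ifs <;> first | rfl | (exfalso; order)
    simp only [s1, s2, a1, a2, Equiv.Perm.mul_apply, Equiv.swap_apply_left,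
      Equiv.swap_apply_right, Equiv.swap_apply_of_ne_of_ne hab hac,
      Equiv.swap_apply_of_ne_of_ne hac.symm hbc.symm, mul_assoc, hbr]
    split_ifs <;> rfl
  · by_cases h : i + 1 < n
    · have : ∀ w : Equiv.Perm (Fin n), ¬ IsAsc w i := fun w h' => hi ⟨h'.1.1, h⟩
      simp [this]
    · have : ∀ w : Equiv.Perm (Fin n), ¬ IsAsc w (i + 1) := fun w h' => h h'.1.2
      simp [this]

/-- The operator `h_l(a) = 1 + a u_l`. -/
def nilExp (R : Type*) [CommRing R] (n l : ℕ) (a : R) :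
    Module.End R (Equiv.Perm (Fin n) → R) := 1 + a • nilOp R n l

lemma nilExp_apply (l : ℕ) (a : R) (g : Equiv.Perm (Fin n) → R) (u : Equiv.Perm (Fin n)) :
    nilExp R n l a g u = g u + a * if IsAsc u l then g (u * adjSwap l) else 0 := rfl

lemma nilExp_isYangBaxter : IsYangBaxter (nilExp R n) where
  zero i := by simp [nilExp]
  add i a b := by
    simp only [nilExp, add_mul, mul_add, one_mul, mul_one, smul_mul_assoc, mul_smul_comm,
      nilOp_sq, smul_zero]
    module
  comm i j a b hij := by
    simp only [nilExp, add_mul, mul_add, one_mul, mul_one, smul_mul_assoc, mul_smul_comm,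
      nilOp_comm i j hij]
    module
  braid i a b := by
    have hb := nilOp_braid (R := R) (n := n) i
    simp only [nilExp, add_mul, mul_add, one_mul, mul_one, smul_mul_assoc, mul_smul_comm,
      nilOp_sq, smul_zero, hb]
    module

end Operators

/-! ### Reduced pipe dreams as coefficients of operator products -/

section Coefficients

variable {R : Type*} [CommRing R]

/-- One step of the Demazure product for an arbitrary labeling of the boxes. -/
def labStep (lab : ℕ × ℕ → ℕ) (u : Equiv.Perm (Fin n)) (b : ℕ × ℕ) : Equiv.Perm (Fin n) :=
  if invCount u < invCount (u * adjSwap (lab b)) then u * adjSwap (lab b) else u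

/-- The product of the operators `h_{lab b}(wt b)` over a list of boxes. -/
def boxProd (n : ℕ) (lab : ℕ × ℕ → ℕ) (wt : ℕ × ℕ → R) (L : List (ℕ × ℕ)) :
    Module.End R (Equiv.Perm (Fin n) → R) :=
  (L.map fun b => nilExp R n (lab b) (wt b)).prod

lemma invCount_foldl_le (lab : ℕ × ℕ → ℕ) (L : List (ℕ × ℕ)) (u : Equiv.Perm (Fin n)) :
    invCount (L.foldl (labStep lab) u) ≤ invCount u + L.length := by
  induction L generalizing u with
  | nil => simp
  | cons b L ih =>
    rw [List.foldl_cons, List.length_cons]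
    refine (ih _).trans ?_
    unfold labStep
    split_ifs with h
    · rw [invCount_of_isAsc ((isAsc_iff _ _).1 h)]; omega
    · omega

lemma length_filter_mem {α : Type*} [DecidableEq α] {L : List α} (hL : L.Nodup) {P : Finset α}
    (hP : P ⊆ L.toFinset) : (L.filter fun b => decide (b ∈ P)).length = P.card := by
  rw [← List.toFinset_card_of_nodup (hL.filter _)]
  congr 1
  ext b
  simpa using fun hb => List.mem_toFinset.1 (hP hb)

/-- Expanding the operator product over the boxes of `L`: only subsets of boxes all of whose
Demazure steps increase the length contribute, i.e. the reduced ones. -/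
lemma sum_reduced_eq (lab : ℕ × ℕ → ℕ) (wt : ℕ × ℕ → R) (x : Equiv.Perm (Fin n))
    (L : List (ℕ × ℕ)) (hL : L.Nodup) (u : Equiv.Perm (Fin n)) :
    (∑ P ∈ L.toFinset.powerset,
      if (L.filter fun b => decide (b ∈ P)).foldl (labStep lab) u = x ∧
        P.card + invCount u = invCount x then ∏ b ∈ P, wt b else 0)
      = boxProd n lab wt L (Pi.single x 1) u := by
  induction L generalizing u with
  | nil =>
    simp only [boxProd, List.map_nil, List.prod_nil, Module.End.one_apply, Pi.single_apply]
    simp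
    grind
  | cons b L ih =>
    rw [List.nodup_cons] at hL
    obtain ⟨hb, hL⟩ := hL
    have hb' : b ∉ L.toFinset := by simpa using hb
    rw [List.toFinset_cons, Finset.sum_powerset_insert hb']
    have hprod : boxProd n lab wt (b :: L) = nilExp R n (lab b) (wt b) * boxProd n lab wt L := by
      simp [boxProd]
    rw [hprod, Module.End.mul_apply, nilExp_apply, ← ih hL]
    congr 1
    · refine Finset.sum_congr rfl fun P hP => ?_
      have hbP : b ∉ P := fun h => hb' (Finset.mem_powerset.1 hP h)
      rw [List.filter_cons_of_neg (by simpa using hbP)]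
    · have hfil : ∀ P ∈ L.toFinset.powerset,
          ((b :: L).filter fun c => decide (c ∈ insert b P))
            = b :: L.filter fun c => decide (c ∈ P) := by
        intro P hP
        rw [List.filter_cons_of_pos (by simp)]
        congr 1
        refine List.filter_congr fun c hc => ?_
        have : c ≠ b := fun h => hb (h ▸ hc)
        simp [this]
      have hcard : ∀ P ∈ L.toFinset.powerset, (insert b P).card = P.card + 1 := fun P hP =>
        Finset.card_insert_of_notMem fun h => hb' (Finset.mem_powerset.1 hP h)
      have hprd : ∀ P ∈ L.toFinset.powerset, ∏ c ∈ insert b P, wt c = wt b * ∏ c ∈ P, wt c :=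
        fun P hP => Finset.prod_insert fun h => hb' (Finset.mem_powerset.1 hP h)
      split_ifs with hasc
      · rw [← ih hL, Finset.mul_sum]
        refine Finset.sum_congr rfl fun P hP => ?_
        rw [hfil P hP, hcard P hP, hprd P hP, List.foldl_cons, mul_ite, mul_zero]
        rw [show labStep lab u b = u * adjSwap (lab b) from if_pos ((isAsc_iff _ _).2 hasc),
          invCount_of_isAsc hasc]
        simp only [add_assoc, add_comm 1]
      · rw [mul_zero]
        refine Finset.sum_eq_zero fun P hP => if_neg ?_
        rw [hfil P hP, hcard P hP, List.foldl_cons,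
          show labStep lab u b = u from if_neg fun h => hasc ((isAsc_iff _ _).1 h)]
        rintro ⟨h1, h2⟩
        -- A step that does not increase the length cannot be made up for by the later boxes.
        have := invCount_foldl_le lab (L.filter fun c => decide (c ∈ P)) u
        rw [h1, length_filter_mem hL (Finset.mem_powerset.1 hP)] at this
        omega

lemma mem_readingList {D : Finset (ℕ × ℕ)} {b : ℕ × ℕ} :
    b ∈ readingList n D ↔ b ∈ D ∧ b.1 < n ∧ b.2 < n := by
  obtain ⟨i, j⟩ := b
  simp only [readingList, List.mem_flatMap, List.mem_reverse, List.mem_range, List.mem_map,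
    List.mem_filter, decide_eq_true_eq, Prod.mk.injEq]
  grind

lemma readingList_nodup (D : Finset (ℕ × ℕ)) : (readingList n D).Nodup := by
  unfold readingList
  rw [List.nodup_flatMap]
  refine ⟨fun i _ => ?_, ?_⟩
  · exact (List.nodup_range.filter _).map fun a b h => by simpa using h
  · refine (List.nodup_reverse.2 List.nodup_range).imp ?_
    intro a b hab c h1 h2
    simp only [List.mem_map, List.mem_filter] at h1 h2
    grind

lemma readingList_filter {D P : Finset (ℕ × ℕ)} (h : P ⊆ D) :
    (readingList n D).filter (fun b => decide (b ∈ P)) = readingList n P := by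
  unfold readingList
  rw [List.filter_flatMap]
  congr 1
  funext i
  rw [List.filter_map, List.filter_filter]
  congr 1
  refine List.filter_congr fun j _ => ?_
  simp only [Function.comp_apply, ← Bool.decide_and, decide_eq_decide]
  exact ⟨fun h => h.1, fun h' => ⟨h', h h'⟩⟩

/-- The sum over reduced subsets of a diagram `D` is a matrix coefficient of the product of the
operators `h` over the boxes of `D`. -/
lemma sum_diagram_eq (D : Finset (ℕ × ℕ)) (hD : ∀ b ∈ D, b.1 < n ∧ b.2 < n)
    (lab : ℕ × ℕ → ℕ) (wt : ℕ × ℕ → R) (x : Equiv.Perm (Fin n)) :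
    (∑ P ∈ (D.powerset.filter fun P => (readingList n P).foldl (labStep lab) 1 = x).filter
      fun P => P.card = invCount x, ∏ b ∈ P, wt b)
      = boxProd n lab wt (readingList n D) (Pi.single x 1) 1 := by
  have hDL : (readingList n D).toFinset = D := by
    ext b
    rw [List.mem_toFinset, mem_readingList]
    exact ⟨fun h => h.1, fun h => ⟨h, hD b h⟩⟩
  have h1 : invCount (1 : Equiv.Perm (Fin n)) = 0 := by
    rw [invCount, Finset.card_eq_zero, Finset.filter_eq_empty_iff]
    rintro p - ⟨h1, h2⟩
    exact lt_asymm h1 h2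
  rw [← sum_reduced_eq lab wt x _ (readingList_nodup D), hDL, Finset.filter_filter,
    Finset.sum_filter]
  refine Finset.sum_congr rfl fun P hP => ?_
  rw [readingList_filter (Finset.mem_powerset.1 hP), h1, add_zero]

end Coefficients

/-! ### Row decompositions of the two diagrams -/

/-- The product of the operators over row `i` of the diagram `D`. -/
def diagRow {R : Type*} [CommRing R] (n : ℕ) (D : Finset (ℕ × ℕ)) (lab : ℕ × ℕ → ℕ)
    (wt : ℕ × ℕ → R) (i : ℕ) : Module.End R (Equiv.Perm (Fin n) → R) :=
  (((List.range n).filter fun j => decide ((i, j) ∈ D)).map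
    fun j => nilExp R n (lab (i, j)) (wt (i, j))).prod

/-- The product of the operators over the top `m` rows of the diagram `D`. -/
def topRows {R : Type*} [CommRing R] (n : ℕ) (D : Finset (ℕ × ℕ)) (lab : ℕ × ℕ → ℕ)
    (wt : ℕ × ℕ → R) : ℕ → Module.End R (Equiv.Perm (Fin n) → R)
  | 0 => 1
  | m + 1 => topRows n D lab wt m * diagRow n D lab wt (n - 1 - m)

lemma topRows_eq_prod {R : Type*} [CommRing R] (D : Finset (ℕ × ℕ)) (lab : ℕ × ℕ → ℕ)
    (wt : ℕ × ℕ → R) (m : ℕ) : topRows n D lab wt m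
      = ((List.range m).map fun i => diagRow n D lab wt (n - 1 - i)).prod := by
  induction m with
  | zero => rfl
  | succ m ih => simp [topRows, ih, List.range_succ]

lemma prod_map_flatMap {α β M : Type*} [Monoid M] (f : α → List β) (g : β → M) (L : List α) :
    ((L.flatMap f).map g).prod = (L.map fun a => ((f a).map g).prod).prod := by
  induction L with
  | nil => simp
  | cons a L ih => simp [ih]

lemma boxProd_readingList {R : Type*} [CommRing R] (D : Finset (ℕ × ℕ)) (lab : ℕ × ℕ → ℕ)
    (wt : ℕ × ℕ → R) : boxProd n lab wt (readingList n D) = topRows n D lab wt n := by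
  rw [topRows_eq_prod, boxProd, readingList, prod_map_flatMap,
    List.range_eq_range', List.reverse_range', List.map_map]
  simp only [List.map_map, zero_add, List.range_eq_range']
  congr 1
  refine List.map_congr_left fun i _ => ?_
  simp only [diagRow, Function.comp_def, List.range_eq_range']

/-- The parameter `t_{k+1}` attached to the 0-based value `k`. -/
def tvar (k : ℕ) : MvPolynomial ℕ ℤ := X (k + 1)

/-- The weight `t_{v(j)} - t_{n-i+1}` of a box, in 0-based coordinates. -/
def boxWt (v : Equiv.Perm (Fin n)) (b : ℕ × ℕ) : MvPolynomial ℕ ℤ :=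
  X (permVal v b.2 + 1) - X (n - b.1)

/-- If the labels along a set of columns, from left to right, count up from `l`, the product of
the operators over these columns is a `rowProd`. -/
lemma rowProd_eq_prod (v : Equiv.Perm (Fin n)) (p : ℕ → Prop) [DecidablePred p] (lab : ℕ → ℕ) (l : ℕ)
    (y : MvPolynomial ℕ ℤ) (k : ℕ)
    (hlab : ∀ q < k, p q → lab q = l + ((List.range q).filter fun j => decide (p j)).length) :
    (((List.range k).filter fun j => decide (p j)).map
      fun j => nilExp (MvPolynomial ℕ ℤ) n (lab j) (tvar (permVal v j) - y)).prod
      = rowProd (nilExp (MvPolynomial ℕ ℤ) n) l y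
        (((List.range k).filter fun j => decide (p j)).map fun j => tvar (permVal v j)) := by
  induction k with
  | zero => simp [rowProd]
  | succ k ih =>
    rw [List.range_succ, List.filter_append, List.map_append, List.map_append, List.prod_append,
      rowProd_append, ih fun q hq => hlab q (by omega)]
    congr 1
    by_cases hp : p k
    · simp [hp, rowProd, hlab k (by omega) hp]
    · simp [hp, rowProd]

lemma boxWt_row (v : Equiv.Perm (Fin n)) {m j : ℕ} (hm : m < n) :
    boxWt v (n - 1 - m, j) = tvar (permVal v j) - tvar m := by
  simp only [boxWt, tvar]
  rw [show n - (n - 1 - m) = m + 1 by omega]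

lemma staircase_topRows (v : Equiv.Perm (Fin n)) (m : ℕ) (hm : m ≤ n) :
    topRows n (staircase n) fkLabel (boxWt v) m
      = stairProd (nilExp (MvPolynomial ℕ ℤ) n) (n - m + 1)
        ((List.range m).reverse.map tvar)
        ((List.range m).map fun j => tvar (permVal v j)) := by
  induction m with
  | zero => simp [topRows, stairProd]
  | succ m ih =>
    have hr : ((List.range (m + 1)).reverse.map tvar)
        = tvar m :: (List.range m).reverse.map tvar := by simp [List.range_succ]
    have hc : ((List.range (m + 1)).map fun j => tvar (permVal v j)).dropLast
        = (List.range m).map fun j => tvar (permVal v j) := by simp [List.range_succ]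
    rw [topRows, ih (by omega), hr, stairProd, hc]
    rw [show n - (m + 1) + 1 + 1 = n - m + 1 by omega, show n - (m + 1) + 1 = n - m by omega]
    congr 1
    have hfil : ((List.range n).filter fun j => decide ((n - 1 - m, j) ∈ staircase n))
        = (List.range m).filter fun j => decide True := by
      rw [show n = m + (n - m) by omega, List.range_add, List.filter_append]
      simp only [staircase, Finset.mem_filter, Finset.mem_product, Finset.mem_range]
      rw [List.filter_eq_nil_iff (l := List.map _ _) |>.2, List.append_nil]
      · refine List.filter_congr fun j hj => ?_
        rw [List.mem_range] at hj
        simp only [decide_eq_decide, iff_true]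
        omega
      · intro j hj
        simp only [List.mem_map, List.mem_range] at hj
        simp only [decide_eq_true_eq]
        omega
    have := rowProd_eq_prod v (fun _ => True) (fun j => fkLabel (n - 1 - m, j)) (n - m)
      (tvar m) m (fun q _ _ => by simp [fkLabel]; omega)
    simp only [diagRow, boxWt_row v hm, hfil]
    simpa using this

/-- The columns met by the row of `D(v)` with parameter `m`: those to the left of the position
of `m` in `v` carrying a smaller value. -/
lemma mem_Rothe_iff (v : Equiv.Perm (Fin n)) {m k j : ℕ} (hm : m < n)
    (hk : permVal v.symm m = k) (hkn : k < n) :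
    (n - 1 - m, j) ∈ Rothe v ↔ j < k ∧ permVal v j < m := by
  simp only [Rothe, Finset.mem_filter, Finset.mem_product, Finset.mem_range]
  rw [show n - 1 - (n - 1 - m) = m by omega, hk]
  omega

lemma rothe_topRows (v : Equiv.Perm (Fin n)) (m : ℕ) (hm : m ≤ n) :
    topRows n (Rothe v) (canonLabel v) (boxWt v) m
      = stairProd (nilExp (MvPolynomial ℕ ℤ) n) (n - m + 1)
        ((List.range m).reverse.map tvar)
        (((List.range n).filter fun j => decide (permVal v j < m)).map
          fun j => tvar (permVal v j)) := by
  have hlen : ∀ m ≤ n, ((List.range n).filter fun j => decide (permVal v j < m)).length = m := by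
    intro m hm
    rw [← List.toFinset_card_of_nodup (List.nodup_range.filter _)]
    conv_rhs => rw [← Finset.card_range m]
    refine Finset.card_bij (fun j _ => permVal v j) ?_ ?_ ?_
    · intro j hj
      simp at hj ⊢
      exact hj.2
    · intro a ha b hb hab
      simp at ha hb
      simp only [permVal, ha.1, hb.1, dif_pos] at hab
      simpa using v.injective (Fin.ext hab)
    · intro b hb
      rw [Finset.mem_range] at hb
      refine ⟨v.symm ⟨b, by omega⟩, ?_, ?_⟩ <;> simp [permVal, hb]
  induction m with
  | zero => simp [topRows, stairProd]
  | succ m ih =>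
    have hr : ((List.range (m + 1)).reverse.map tvar)
        = tvar m :: (List.range m).reverse.map tvar := by simp [List.range_succ]
    obtain ⟨k, hk⟩ : ∃ k, permVal v.symm m = k := ⟨_, rfl⟩
    have hkn : k < n := by
      rw [← hk, permVal, dif_pos (show m < n by omega)]
      exact Fin.isLt _
    have hv : ∀ j < n, (permVal v j = m ↔ j = k) := by
      intro j hj
      rw [← hk, permVal, permVal, dif_pos hj, dif_pos (show m < n by omega)]
      constructor
      · intro h
        have : v ⟨j, hj⟩ = ⟨m, by omega⟩ := Fin.ext h
        rw [← this]; simp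
      · intro h
        have : (⟨j, hj⟩ : Fin n) = v.symm ⟨m, by omega⟩ := Fin.ext h
        rw [this]; simp
    obtain ⟨A, hA⟩ : ∃ A, A = (List.range k).filter fun j => decide (permVal v j < m) := ⟨_, rfl⟩
    obtain ⟨B, hB⟩ : ∃ B, B = ((List.range (n - k - 1)).map (k + 1 + ·)).filter
      fun j => decide (permVal v j < m) := ⟨_, rfl⟩
    have hsplit : List.range n
        = List.range k ++ k :: (List.range (n - k - 1)).map (k + 1 + ·) := by
      conv_lhs => rw [show n = k + 1 + (n - k - 1) by omega, List.range_add, List.range_succ]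
      simp
    have hlt : ∀ j < n, j ≠ k → (permVal v j < m + 1 ↔ permVal v j < m) := by
      intro j hj hjk
      have := (hv j hj).not.2 hjk
      omega
    have hf1 : ((List.range n).filter fun j => decide (permVal v j < m + 1)) = A ++ k :: B := by
      rw [hsplit, List.filter_append, List.filter_cons_of_pos (by simp [(hv k hkn).2 rfl]), hA, hB]
      congr 1
      · refine List.filter_congr fun j hj => ?_
        rw [List.mem_range] at hj
        rw [decide_eq_decide]
        exact hlt j (by omega) (by omega)
      · congr 1
        refine List.filter_congr fun j hj => ?_
        simp only [List.mem_map, List.mem_range] at hj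
        rw [decide_eq_decide]
        exact hlt j (by omega) (by omega)
    have hf2 : ((List.range n).filter fun j => decide (permVal v j < m)) = A ++ B := by
      rw [hsplit, List.filter_append, List.filter_cons_of_neg (by simp [(hv k hkn).2 rfl]), hA, hB]
    have hAB : (A ++ B).length = m := by rw [← hf2]; exact hlen m (by omega)
    rw [topRows, ih (by omega), hr, hf1, hf2]
    simp only [List.map_append, List.map_cons]
    rw [(hv k hkn).2 rfl, stairProd_specialize nilExp_isYangBaxter _ _ _ _ _
      (by simpa using hAB.symm)]
    rw [show n - (m + 1) + 1 + 1 = n - m + 1 by omega, show n - (m + 1) + 1 = n - m by omega]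
    congr 1
    have hfil : ((List.range n).filter fun j => decide ((n - 1 - m, j) ∈ Rothe v)) = A := by
      simp only [mem_Rothe_iff v (show m < n by omega) hk hkn]
      rw [hsplit, List.filter_append, List.filter_cons_of_neg (by simp),
        List.filter_eq_nil_iff (l := List.map _ _) |>.2, List.append_nil, hA]
      · refine List.filter_congr fun j hj => ?_
        rw [List.mem_range] at hj
        simp [hj]
      · intro j hj
        simp only [List.mem_map, List.mem_range] at hj
        simp only [decide_eq_true_eq]
        omega
    have hlab : ∀ q < k, permVal v q < m → canonLabel v (n - 1 - m, q)
        = n - m + ((List.range q).filter fun j => decide (permVal v j < m)).length := by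
      intro q hq hqm
      have hcard : ((Rothe v).filter fun b' => b'.1 = n - 1 - m ∧ b'.2 ≤ q).card
          = ((List.range (q + 1)).filter fun j => decide (permVal v j < m)).length := by
        rw [← List.toFinset_card_of_nodup (List.nodup_range.filter _)]
        refine Finset.card_bij' (fun b _ => b.2) (fun j _ => (n - 1 - m, j)) ?_ ?_ ?_ ?_
        · rintro ⟨i, j⟩ hb
          rw [Finset.mem_filter] at hb
          obtain ⟨hb, rfl, hj⟩ := hb
          rw [mem_Rothe_iff v (by omega) hk hkn] at hb
          simp only [List.mem_toFinset, List.mem_filter, List.mem_range, decide_eq_true_eq]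
          exact ⟨by omega, hb.2⟩
        · intro j hj
          simp only [List.mem_toFinset, List.mem_filter, List.mem_range, decide_eq_true_eq] at hj
          rw [Finset.mem_filter, mem_Rothe_iff v (by omega) hk hkn]
          exact ⟨⟨by omega, hj.2⟩, rfl, by simp; omega⟩
        · rintro ⟨i, j⟩ hb
          rw [Finset.mem_filter] at hb
          rw [Prod.mk.injEq]
          exact ⟨hb.2.1.symm, rfl⟩
        · intro j _
          rfl
      rw [canonLabel]
      simp only
      rw [hcard, List.range_succ, List.filter_append]
      simp [hqm]
      omega
    have := rowProd_eq_prod v (fun j => permVal v j < m) (fun j => canonLabel v (n - 1 - m, j))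
      (n - m) (tvar m) k hlab
    rw [← hA] at this
    simp only [diagRow, boxWt_row v hm, hfil, this]

/-- Theorem 4.5, Schubert case: the Buch–Rimányi specialization
formula. The double Schubert polynomial `𝔖_{w₀w}` evaluated at `x_j = t_{v(j)}`,
`y_i = t_{n-i+1}` (i.e. the FK pipe dream formula) equals the analogous sum over
reduced pipe dreams on the Rothe diagram `D(v)`. -/
theorem schubert_specialization (n : ℕ) (v w : Equiv.Perm (Fin n)) :
    (∑ P ∈ RedFKPipes ((longest : Equiv.Perm (Fin n)) * w),
        ∏ b ∈ P, (X (permVal v b.2 + 1) - X (n - b.1) : MvPolynomial ℕ ℤ))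
      = ∑ P ∈ RedPipes v ((longest : Equiv.Perm (Fin n)) * w),
          ∏ b ∈ P, (X (permVal v b.2 + 1) - X (n - b.1) : MvPolynomial ℕ ℤ) := by
  have hl := sum_diagram_eq (staircase n)
    (fun b hb => by simpa using (Finset.mem_product.1 (Finset.mem_filter.1 hb).1))
    fkLabel (boxWt v) (longest * w)
  have hr := sum_diagram_eq (Rothe v)
    (fun b hb => by simpa using (Finset.mem_product.1 (Finset.mem_filter.1 hb).1))
    (canonLabel v) (boxWt v) (longest * w)
  -- For `m = n` the condition `permVal v j < m` is vacuous, so both products have all columns.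
  have hall : ((List.range n).filter fun j => decide (permVal v j < n)) = List.range n := by
    refine List.filter_eq_self.2 fun j hj => ?_
    rw [List.mem_range] at hj
    simp [permVal, hj]
  rw [boxProd_readingList, staircase_topRows v n le_rfl] at hl
  rw [boxProd_readingList, rothe_topRows v n le_rfl, hall] at hr
  exact hl.trans hr.symm

end
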